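/- Fix ν > 0 and an integer n ≥ 2, and let κ_n(λ) denote the n-th cumulant of the CMP(λ,ν) distribution, i.e. κ_n(λ) is the n-th derivative at t = 0 of the function t ↦ ln(Z(λ·e^t, ν)). Then as λ → ∞, κ_n(λ) = (λ^(1/ν)/ν^(n−1))·(1 + ((−1)^n·(ν²−1)/(24ν²))·λ^(−2/ν) + ((−2)^n·(ν²−1)/(48ν³))·λ^(−3/ν) + O(λ^(−4/ν))). Precisely: there exist constants C > 0 and Λ > 0 (depending only on ν and n) such that for all λ ≥ Λ, |ν^(n−1)·λ^(−1/ν)·κ_n(λ) − 1 − ((−1)^n·(ν²−1)/(24ν²))·λ^(−2/ν) − ((−2)^n·(ν²−1)/(48ν³))·λ^(−3/ν)| ≤ C·λ^(−4/ν). -/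

import Mathlib

open scoped BigOperators

/-- The Conway-Maxwell-Poisson normalizing constant `Z(λ,ν) = ∑_{i=0}^∞ λ^i/(i!)^ν`. -/
noncomputable def cmpZ (lam nu : ℝ) : ℝ := ∑' i : ℕ, lam ^ i / (i.factorial : ℝ) ^ nu

/-- The `n`-th cumulant of the `CMP(λ,ν)` distribution: the `n`-th derivative at `t = 0`
of `t ↦ ln Z(λ e^t, ν)`. -/
noncomputable def cmpCumulant (n : ℕ) (lam nu : ℝ) : ℝ :=
  iteratedDeriv n (fun t : ℝ => Real.log (cmpZ (lam * Real.exp t) nu)) 0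

namespace CMPAux
open Filter Topology Asymptotics

/-- weights -/
noncomputable def w (ν x : ℝ) (i : ℕ) : ℝ := Real.exp x ^ i / (i.factorial : ℝ) ^ ν
/-- normalizer -/
noncomputable def Z (ν x : ℝ) : ℝ := ∑' i, w ν x i
/-- polynomial growth -/
def PG (f : ℕ → ℝ) : Prop := ∃ (C : ℝ) (k : ℕ), ∀ i, |f i| ≤ C * ((i : ℝ) + 1) ^ k
/-- expectation -/
noncomputable def E (ν x : ℝ) (f : ℕ → ℝ) : ℝ := (∑' i, f i * w ν x i) / Z ν x

lemma w_pos (ν x : ℝ) (i : ℕ) : 0 < w ν x i := by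
  unfold w; positivity

lemma w_succ (ν x : ℝ) (i : ℕ) :
    ((i : ℝ) + 1) ^ ν * w ν x (i + 1) = Real.exp x * w ν x i := by
  unfold w
  rw [Nat.factorial_succ]
  push_cast
  rw [Real.mul_rpow (by positivity) (by positivity)]
  have h1 : 0 < ((i : ℝ) + 1) ^ ν := by positivity
  have h2 : 0 < (i.factorial : ℝ) ^ ν := by positivity
  field_simp
  ring

lemma summable_pow (ν : ℝ) (hν : 0 < ν) (x : ℝ) (k : ℕ) :
    Summable (fun i : ℕ => ((i : ℝ) + 1) ^ k * w ν x i) := by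
  refine summable_of_ratio_test_tendsto_lt_one (l := 0) (by norm_num) ?_ ?_
  · exact Eventually.of_forall fun i => (mul_pos (by positivity) (w_pos ν x i)).ne'
  · have h1 : Tendsto (fun i : ℕ => (1 + 1 / ((i : ℝ) + 1)) ^ k) atTop (𝓝 ((1 + 0) ^ k)) :=
      (tendsto_const_nhds.add tendsto_one_div_add_atTop_nhds_zero_nat).pow k
    have h2 : Tendsto (fun i : ℕ => (((i : ℝ) + 1) ^ ν)⁻¹) atTop (𝓝 0) := by
      refine Tendsto.inv_tendsto_atTop ?_
      refine (tendsto_rpow_atTop hν).comp ?_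
      exact tendsto_atTop_add_const_right _ _ tendsto_natCast_atTop_atTop
    have h3 := (h1.mul (h2.const_mul (Real.exp x)))
    simp only [mul_zero] at h3
    refine h3.congr fun i => ?_
    have hw := w_pos ν x i
    have e := w_succ ν x i
    have h4 : 0 < ((i : ℝ) + 1) ^ ν := by positivity
    have e' : w ν x (i + 1) = Real.exp x * w ν x i / ((i : ℝ) + 1) ^ ν := by
      field_simp; linarith
    rw [Real.norm_of_nonneg (mul_pos (by positivity) (w_pos ν x _)).le,
      Real.norm_of_nonneg (mul_pos (by positivity) (w_pos ν x _)).le, e']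
    push_cast
    have h5 : (0 : ℝ) < (i : ℝ) + 1 := by positivity
    have h6 : 1 + 1 / ((i : ℝ) + 1) = ((i : ℝ) + 1 + 1) / ((i : ℝ) + 1) := by field_simp
    rw [h6, div_pow]
    field_simp

lemma PG.summable {f : ℕ → ℝ} (hf : PG f) {ν : ℝ} (hν : 0 < ν) (x : ℝ) :
    Summable (fun i => f i * w ν x i) := by
  obtain ⟨C, k, h⟩ := hf
  refine Summable.of_norm_bounded ((summable_pow ν hν x k).mul_left C) fun i => ?_
  rw [norm_mul, Real.norm_of_nonneg (w_pos ν x i).le, ← mul_assoc]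
  exact mul_le_mul_of_nonneg_right (h i) (w_pos ν x i).le

lemma PG.const (c : ℝ) : PG (fun _ => c) := ⟨|c|, 0, fun i => by simp⟩
lemma PG.id : PG (fun i => (i : ℝ)) := ⟨1, 1, fun i => by
  rw [abs_of_nonneg (by positivity)]; simp⟩
lemma PG.nonneg_exists {f : ℕ → ℝ} (hf : PG f) :
    ∃ (C : ℝ) (k : ℕ), 0 ≤ C ∧ ∀ i, |f i| ≤ C * ((i : ℝ) + 1) ^ k := by
  obtain ⟨C, k, h⟩ := hf
  refine ⟨C, k, ?_, h⟩
  have := (abs_nonneg _).trans (h 0)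
  simpa using this
lemma PG.add {f g : ℕ → ℝ} (hf : PG f) (hg : PG g) : PG (fun i => f i + g i) := by
  obtain ⟨C, k, hC, h⟩ := hf.nonneg_exists
  obtain ⟨D, l, hD, h'⟩ := hg.nonneg_exists
  refine ⟨C + D, k + l, fun i => ?_⟩
  have h1 : (1 : ℝ) ≤ (i : ℝ) + 1 := by simp
  have a1 : ((i : ℝ) + 1) ^ k ≤ ((i : ℝ) + 1) ^ (k + l) := pow_le_pow_right₀ h1 (by omega)
  have a2 : ((i : ℝ) + 1) ^ l ≤ ((i : ℝ) + 1) ^ (k + l) := pow_le_pow_right₀ h1 (by omega)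
  calc |f i + g i| ≤ |f i| + |g i| := abs_add_le _ _
    _ ≤ C * ((i : ℝ) + 1) ^ k + D * ((i : ℝ) + 1) ^ l := add_le_add (h i) (h' i)
    _ ≤ C * ((i : ℝ) + 1) ^ (k + l) + D * ((i : ℝ) + 1) ^ (k + l) := by gcongr
    _ = _ := by ring
lemma PG.mul {f g : ℕ → ℝ} (hf : PG f) (hg : PG g) : PG (fun i => f i * g i) := by
  obtain ⟨C, k, hC, h⟩ := hf.nonneg_exists
  obtain ⟨D, l, hD, h'⟩ := hg.nonneg_exists
  refine ⟨C * D, k + l, fun i => ?_⟩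
  calc |f i * g i| = |f i| * |g i| := abs_mul _ _
    _ ≤ (C * ((i : ℝ) + 1) ^ k) * (D * ((i : ℝ) + 1) ^ l) := by gcongr <;> solve_by_elim
    _ = _ := by ring
lemma PG.pow {f : ℕ → ℝ} (hf : PG f) (n : ℕ) : PG (fun i => f i ^ n) := by
  induction n with
  | zero => simpa using PG.const 1
  | succ n ih => simpa [pow_succ] using ih.mul hf
lemma PG.abs {f : ℕ → ℝ} (hf : PG f) : PG (fun i => |f i|) := by
  obtain ⟨C, k, h⟩ := hf
  exact ⟨C, k, fun i => by simpa using h i⟩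
lemma PG.const_mul {f : ℕ → ℝ} (c : ℝ) (hf : PG f) : PG (fun i => c * f i) :=
  (PG.const c).mul hf
lemma PG.sub {f g : ℕ → ℝ} (hf : PG f) (hg : PG g) : PG (fun i => f i - g i) := by
  have := hf.add (hg.const_mul (-1))
  refine (congrArg PG (funext fun i => ?_)).mp this
  ring
lemma PG.sum {ι : Type} (s : Finset ι) {f : ι → ℕ → ℝ} (hf : ∀ j, PG (f j)) :
    PG (fun i => ∑ j ∈ s, f j i) := by
  classical
  induction s using Finset.induction_on with
  | empty => simpa using PG.const 0
  | insert a s ha ih => simpa [Finset.sum_insert ha] using (hf a).add ih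
lemma PG.rpow (ν : ℝ) : PG (fun i => (i : ℝ) ^ ν) := by
  refine ⟨1, ⌈|ν|⌉₊, fun i => ?_⟩
  rw [abs_of_nonneg (by positivity), one_mul]
  rcases Nat.eq_zero_or_pos i with h | h
  · subst h
    simp only [Nat.cast_zero, zero_add, one_pow]
    exact Real.zero_rpow_le_one ν
  · have h1 : (1 : ℝ) ≤ i := by exact_mod_cast h
    calc (i : ℝ) ^ ν ≤ (i : ℝ) ^ ((⌈|ν|⌉₊ : ℕ) : ℝ) :=
          Real.rpow_le_rpow_of_exponent_le h1 ((le_abs_self ν).trans (Nat.le_ceil _))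
      _ = (i : ℝ) ^ ⌈|ν|⌉₊ := Real.rpow_natCast _ _
      _ ≤ _ := by gcongr; simp


lemma Z_pos {ν : ℝ} (hν : 0 < ν) (x : ℝ) : 0 < Z ν x := by
  have h : Summable (fun i => w ν x i) := by simpa using (PG.const 1).summable hν x
  exact h.tsum_pos (fun i => (w_pos ν x i).le) 0 (w_pos ν x 0)

lemma E_const {ν : ℝ} (hν : 0 < ν) (x : ℝ) (c : ℝ) : E ν x (fun _ => c) = c := by
  unfold E
  rw [tsum_mul_left]
  exact mul_div_cancel_right₀ _ (Z_pos hν x).ne'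

lemma E_add {ν : ℝ} (hν : 0 < ν) (x : ℝ) {f g : ℕ → ℝ} (hf : PG f) (hg : PG g) :
    E ν x (fun i => f i + g i) = E ν x f + E ν x g := by
  unfold E
  simp only [add_mul]
  rw [(hf.summable hν x).tsum_add (hg.summable hν x), add_div]

lemma E_const_mul {ν : ℝ} (x : ℝ) (c : ℝ) (f : ℕ → ℝ) : E ν x (fun i => c * f i) = c * E ν x f := by
  unfold E
  simp only [mul_assoc]
  rw [tsum_mul_left, mul_div_assoc]

lemma E_sub {ν : ℝ} (hν : 0 < ν) (x : ℝ) {f g : ℕ → ℝ} (hf : PG f) (hg : PG g) :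
    E ν x (fun i => f i - g i) = E ν x f - E ν x g := by
  unfold E
  simp only [sub_mul]
  rw [(hf.summable hν x).tsum_sub (hg.summable hν x), sub_div]

lemma E_sum {ν : ℝ} (hν : 0 < ν) (x : ℝ) {ι : Type} (s : Finset ι) {f : ι → ℕ → ℝ} (hf : ∀ j, PG (f j)) :
    E ν x (fun i => ∑ j ∈ s, f j i) = ∑ j ∈ s, E ν x (f j) := by
  classical
  induction s using Finset.induction_on with
  | empty => simpa using E_const hν x 0
  | insert a s ha ih =>
    simp only [Finset.sum_insert ha]
    rw [E_add hν x (hf a) (PG.sum s hf), ih]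

lemma E_mono {ν : ℝ} (hν : 0 < ν) (x : ℝ) {f g : ℕ → ℝ} (hf : PG f) (hg : PG g) (h : ∀ i, f i ≤ g i) :
    E ν x f ≤ E ν x g := by
  unfold E
  refine div_le_div_of_nonneg_right ?_ (Z_pos hν x).le
  exact (hf.summable hν x).tsum_le_tsum
    (fun i => mul_le_mul_of_nonneg_right (h i) (w_pos ν x i).le) (hg.summable hν x)

lemma abs_E_le {ν : ℝ} (hν : 0 < ν) (x : ℝ) {f g : ℕ → ℝ} (hf : PG f) (hg : PG g) (h : ∀ i, |f i| ≤ g i) :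
    |E ν x f| ≤ E ν x g := by
  rw [abs_le]
  constructor
  · have := E_mono hν x (hg.const_mul (-1)) hf (fun i => by
      have := neg_abs_le (f i); have := h i; linarith)
    rw [E_const_mul] at this
    linarith
  · exact E_mono hν x hf hg (fun i => (le_abs_self _).trans (h i))

/-- Stein identity -/
lemma stein {ν : ℝ} (hν : 0 < ν) (x : ℝ) {f : ℕ → ℝ} (hf : PG f) :
    E ν x (fun i => (i : ℝ) ^ ν * f i) = Real.exp x * E ν x (fun i => f (i + 1)) := by
  unfold E
  rw [((PG.rpow ν).mul hf |>.summable hν x).tsum_eq_zero_add]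
  simp only [Nat.cast_zero, Real.zero_rpow hν.ne', zero_mul, zero_add]
  rw [← mul_div_assoc, ← tsum_mul_left]
  congr 1
  refine tsum_congr fun i => ?_
  push_cast
  have := w_succ ν x i
  linear_combination f (i + 1) * this

lemma hasDerivAt_sum {ν : ℝ} (hν : 0 < ν) (x : ℝ) (k : ℕ) :
    HasDerivAt (fun y => ∑' i : ℕ, (i : ℝ) ^ k * w ν y i)
      (∑' i : ℕ, (i : ℝ) ^ (k + 1) * w ν x i) x := by
  refine hasDerivAt_tsum_of_isPreconnected (t := Set.Iio (x + 1)) (y₀ := x)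
    (g := fun (i : ℕ) y => (i : ℝ) ^ k * w ν y i)
    (g' := fun (i : ℕ) y => (i : ℝ) ^ (k + 1) * w ν y i)
    (u := fun i : ℕ => (i : ℝ) ^ (k + 1) * w ν (x + 1) i)
    ((PG.id.pow (k + 1)).summable hν _) isOpen_Iio
    isPreconnected_Iio ?_ ?_ (by simp) ((PG.id.pow k).summable hν x) (by simp)
  · intro i y _
    unfold w
    have h : HasDerivAt (fun y => Real.exp y ^ i) (i * Real.exp y ^ i) y := by
      simp only [← Real.exp_nat_mul]
      have := ((hasDerivAt_id' y).const_mul (i : ℝ)).exp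
      refine this.congr_deriv ?_
      ring
    refine ((h.div_const ((i.factorial : ℝ) ^ ν)).const_mul ((i : ℝ) ^ k)).congr_deriv ?_
    ring
  · intro i y hy
    rw [norm_mul, Real.norm_of_nonneg (w_pos ν y i).le, Real.norm_of_nonneg (by positivity)]
    unfold w
    have : y ≤ x + 1 := le_of_lt hy
    gcongr

/-- raw moments -/
noncomputable def mu (ν : ℝ) (k : ℕ) (x : ℝ) : ℝ := E ν x (fun i => (i : ℝ) ^ k)

lemma hasDerivAt_Z {ν : ℝ} (hν : 0 < ν) (x : ℝ) : HasDerivAt (Z ν) (∑' i : ℕ, (i : ℝ) ^ 1 * w ν x i) x := by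
  have := hasDerivAt_sum hν x 0
  have e : Z ν = fun y => ∑' i : ℕ, (i : ℝ) ^ 0 * w ν y i := by
    funext y; simp [Z]
  rw [e]
  exact this

lemma hasDerivAt_logZ {ν : ℝ} (hν : 0 < ν) (x : ℝ) : HasDerivAt (fun y => Real.log (Z ν y)) (mu ν 1 x) x :=
  (hasDerivAt_Z hν x).log (Z_pos hν x).ne'

lemma hasDerivAt_mu {ν : ℝ} (hν : 0 < ν) (x : ℝ) (k : ℕ) :
    HasDerivAt (mu ν k) (mu ν (k + 1) x + (-1) * (mu ν 1 x * mu ν k x)) x := by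
  have h := (hasDerivAt_sum hν x k).div (hasDerivAt_Z hν x) (Z_pos hν x).ne'
  refine h.congr_deriv ?_
  unfold mu E
  have := (Z_pos hν x).ne'
  field_simp
  ring
end CMPAux

namespace CMPAux
open Filter Topology Asymptotics

/-- the small parameter `λ^{-1/ν}` with `λ = exp x` -/
noncomputable def h (ν x : ℝ) : ℝ := Real.exp (-(x / ν))
/-- the centred scaled variable -/
noncomputable def U (ν x : ℝ) (i : ℕ) : ℝ := h ν x * i - 1
/-- scaled moments -/
noncomputable def V (ν : ℝ) (k : ℕ) (x : ℝ) : ℝ := E ν x (fun i => U ν x i ^ k)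
/-- order predicate -/
def OO (ν : ℝ) (N : ℕ) (f : ℝ → ℝ) : Prop := f =O[atTop] fun x => h ν x ^ N

lemma h_pos (ν x : ℝ) : 0 < h ν x := Real.exp_pos _

lemma h_tendsto {ν : ℝ} (hν : 0 < ν) : Tendsto (h ν) atTop (𝓝 0) := by
  unfold h
  exact Real.tendsto_exp_neg_atTop_nhds_zero.comp (tendsto_id.atTop_div_const hν)

lemma h_le_one {ν : ℝ} (hν : 0 < ν) : ∀ᶠ x in atTop, h ν x ≤ 1 :=
  (h_tendsto hν).eventually_le_const (by norm_num)

lemma OO.add {ν : ℝ} {N : ℕ} {f g : ℝ → ℝ} (hf : OO ν N f) (hg : OO ν N g) :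
    OO ν N (fun x => f x + g x) := IsBigO.add hf hg
lemma OO.sub {ν : ℝ} {N : ℕ} {f g : ℝ → ℝ} (hf : OO ν N f) (hg : OO ν N g) :
    OO ν N (fun x => f x - g x) := IsBigO.sub hf hg
lemma OO.cmul {ν : ℝ} {N : ℕ} {f : ℝ → ℝ} (c : ℝ) (hf : OO ν N f) :
    OO ν N (fun x => c * f x) := IsBigO.const_mul_left hf c
lemma OO.mul {ν : ℝ} {N M : ℕ} {f g : ℝ → ℝ} (hf : OO ν N f) (hg : OO ν M g) :
    OO ν (N + M) (fun x => f x * g x) := by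
  unfold OO; simp only [pow_add]; exact IsBigO.mul hf hg
lemma OO.hpow (ν : ℝ) (N : ℕ) : OO ν N (fun x => h ν x ^ N) := isBigO_refl _ _
lemma OO.mono {ν : ℝ} (hν : 0 < ν) {N M : ℕ} {f : ℝ → ℝ} (hf : OO ν N f) (hM : M ≤ N) :
    OO ν M f := by
  refine IsBigO.trans hf (IsBigO.of_bound 1 ?_)
  filter_upwards [h_le_one hν] with x hx
  have := (h_pos ν x).le
  rw [Real.norm_of_nonneg (by positivity), Real.norm_of_nonneg (by positivity), one_mul]
  exact pow_le_pow_of_le_one this hx hM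
lemma OO.congr {ν : ℝ} {N : ℕ} {f g : ℝ → ℝ} (hf : OO ν N f) (H : ∀ x, f x = g x) :
    OO ν N g := by
  rwa [← funext H]
lemma OO.zero (ν : ℝ) (N : ℕ) : OO ν N (fun _ => 0) := isBigO_zero _ _
lemma OO.const {ν : ℝ} (c : ℝ) : OO ν 0 (fun _ => c) := by
  simpa [OO] using isBigO_const_const c (one_ne_zero (α := ℝ)) _
lemma OO.sum {ν : ℝ} {N : ℕ} {ι : Type} (s : Finset ι) {f : ι → ℝ → ℝ}
    (hf : ∀ j ∈ s, OO ν N (f j)) : OO ν N (fun x => ∑ j ∈ s, f j x) :=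
  IsBigO.fun_sum hf

lemma PG.U (ν x : ℝ) : PG (U ν x) := (PG.id.const_mul (h ν x)).sub (PG.const 1)

lemma rpow_ineq0 {ν : ℝ} (hν : 0 < ν) {v : ℝ} (h0 : 0 ≤ v) (h1 : v ≤ 1) :
    min 1 ν * (1 - v) ≤ 1 - v ^ ν := by
  rcases le_total 1 ν with H | H
  · rw [min_eq_left H]
    have : v ^ ν ≤ v ^ (1 : ℝ) := Real.rpow_le_rpow_of_exponent_ge' h0 h1 (by norm_num) H
    rw [Real.rpow_one] at this
    linarith
  · rw [min_eq_right H]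
    have := rpow_one_add_le_one_add_mul_self (s := v - 1) (by linarith) hν.le H
    rw [add_sub_cancel] at this
    linarith

lemma rpow_ineq {ν : ℝ} (hν : 0 < ν) {v : ℝ} (h0 : 0 ≤ v) :
    min 1 ν * (v - 1) ^ 2 ≤ (v ^ ν - 1) * (v - 1) * (v + 1) := by
  have hc : 0 < min 1 ν := lt_min one_pos hν
  rcases le_total v 1 with H | H
  · have := rpow_ineq0 hν h0 H
    have h2 : 0 ≤ (1 - v) * (v + 1) := by nlinarith
    nlinarith [mul_le_mul_of_nonneg_right this h2, mul_nonneg hc.le (sq_nonneg (v - 1)),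
      mul_nonneg (mul_nonneg hc.le (sq_nonneg (v - 1))) h0]
  · have hv : 0 < v := by linarith
    have := rpow_ineq0 hν (v := v⁻¹) (by positivity) (inv_le_one_of_one_le₀ H)
    rw [Real.inv_rpow h0] at this
    have hv1 : 1 ≤ v ^ ν := Real.one_le_rpow H hν.le
    have h3 : min 1 ν * (1 - v⁻¹) ≤ v ^ ν - 1 := by
      have h4 : 0 ≤ min 1 ν * (1 - v⁻¹) := mul_nonneg hc.le (by
        have := inv_le_one_of_one_le₀ H; linarith)
      have h5 : v ^ ν * (1 - (v ^ ν)⁻¹) = v ^ ν - 1 := by field_simp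
      nlinarith
    have h6 : min 1 ν * (1 - v⁻¹) * ((v - 1) * (v + 1))
        = min 1 ν * (v - 1) ^ 2 + min 1 ν * (v - 1) ^ 2 * v⁻¹ := by
      field_simp
    have h7 : 0 ≤ min 1 ν * (v - 1) ^ 2 * v⁻¹ := by positivity
    have h8 : 0 ≤ (v - 1) * (v + 1) := mul_nonneg (by linarith) (by linarith)
    nlinarith [mul_le_mul_of_nonneg_right h3 h8]

lemma one_add_U (ν x : ℝ) (i : ℕ) : 1 + U ν x i = h ν x * i := by unfold U; ring

lemma U_ge (ν x : ℝ) (i : ℕ) : -1 ≤ U ν x i := by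
  have : 0 ≤ h ν x * i := mul_nonneg (h_pos ν x).le (by positivity)
  unfold U; linarith

lemma U_succ (ν x : ℝ) (i : ℕ) : U ν x (i + 1) = U ν x i + h ν x := by
  unfold U; push_cast; ring

lemma h_rpow {ν : ℝ} (hν : 0 < ν) (x : ℝ) : h ν x ^ ν = Real.exp (-x) := by
  unfold h
  rw [← Real.exp_mul]
  congr 1
  field_simp

lemma PG.rpowU (ν x : ℝ) : PG (fun i => (1 + CMPAux.U ν x i) ^ ν) := by
  have := (PG.rpow ν).const_mul (h ν x ^ ν)
  refine (congrArg PG (funext fun i => ?_)).mp this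
  rw [one_add_U, Real.mul_rpow (h_pos ν x).le (by positivity)]

lemma steinU {ν : ℝ} (hν : 0 < ν) (x : ℝ) {f : ℕ → ℝ} (hf : PG f) :
    E ν x (fun i => (1 + U ν x i) ^ ν * f i) = E ν x (fun i => f (i + 1)) := by
  have := stein hν x hf
  have e : (fun i => (1 + U ν x i) ^ ν * f i) =
      fun i : ℕ => Real.exp (-x) * ((i : ℝ) ^ ν * f i) := by
    funext i
    rw [one_add_U, Real.mul_rpow (h_pos ν x).le (by positivity), h_rpow hν]
    ring
  rw [e, E_const_mul, this, ← mul_assoc, ← Real.exp_add]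
  simp

lemma V_zero {ν : ℝ} (hν : 0 < ν) (x : ℝ) : V ν 0 x = 1 := by
  simpa [V] using E_const hν x 1

lemma V_even_nonneg {ν : ℝ} (hν : 0 < ν) (q : ℕ) (x : ℝ) : 0 ≤ V ν (2 * q) x := by
  have := E_mono hν x (PG.const 0) ((PG.U ν x).pow (2 * q)) (fun i => by
    rw [pow_mul]; positivity)
  rwa [E_const hν] at this

lemma diff_bound (q : ℕ) : ∃ C : ℝ, 0 < C ∧ ∀ u t : ℝ, 0 < t → t ≤ 1 →
    ((u + t) ^ (2 * q + 1) * (2 + (u + t)) - u ^ (2 * q + 1) * (2 + u))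
      ≤ C * t * (u ^ (2 * q) + u ^ (2 * q + 2) + t ^ (2 * q)) := by
  have key : ∀ n : ℕ, ∀ u t : ℝ, 0 < t →
      (u + t) ^ (n + 1) - u ^ (n + 1) ≤ t * (n + 1) * (2 ^ n * (|u| ^ n + t ^ n)) := by
    intro n u t ht
    have h1 := abs_pow_sub_pow_le (u + t) u (n + 1)
    rw [add_sub_cancel_left, abs_of_pos ht, Nat.add_sub_cancel] at h1
    push_cast at h1
    have h2 : max |u + t| |u| ≤ |u| + t := by
      refine max_le ((abs_add_le u t).trans (by rw [abs_of_pos ht])) (by linarith)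
    have h3 : max |u + t| |u| ^ n ≤ 2 ^ n * (|u| ^ n + t ^ n) := by
      calc max |u + t| |u| ^ n ≤ (|u| + t) ^ n := by
            gcongr
        _ ≤ 2 ^ (n - 1) * (|u| ^ n + t ^ n) := add_pow_le (abs_nonneg u) ht.le n
        _ ≤ _ := by
            gcongr
            · norm_num
            · omega
    calc _ ≤ _ := le_abs_self _
      _ ≤ _ := h1
      _ ≤ _ := by gcongr
  refine ⟨2 * ((2 * q + 1) * 2 ^ (2 * q)) + (2 * q + 2) * 2 ^ (2 * q + 1), by positivity, ?_⟩
  intro u t ht ht1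
  have k1 := key (2 * q) u t ht
  have k2 := key (2 * q + 1) u t ht
  push_cast at k1 k2
  have e0 : |u| ^ (2 * q) = u ^ (2 * q) := by rw [pow_mul, pow_mul, sq_abs]
  have e1 : |u| ^ (2 * q + 1) ≤ u ^ (2 * q) + u ^ (2 * q + 2) := by
    have : u ^ (2 * q + 2) = |u| ^ (2 * q) * |u| ^ 2 := by
      rw [e0, sq_abs, pow_add]
    rw [this, ← e0, pow_succ]
    have : 0 ≤ |u| ^ (2 * q) := by positivity
    nlinarith [sq_nonneg (|u| - 1), abs_nonneg u]
  have e2 : t ^ (2 * q + 1) ≤ t ^ (2 * q) := pow_le_pow_of_le_one ht.le ht1 (by omega)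
  have p0 : 0 ≤ u ^ (2 * q) := by rw [← e0]; positivity
  have p2 : 0 ≤ u ^ (2 * q + 2) := by
    rw [show 2 * q + 2 = 2 * (q + 1) by ring, pow_mul]; positivity
  have p3 : 0 ≤ t ^ (2 * q) := by positivity
  set S := u ^ (2 * q) + u ^ (2 * q + 2) + t ^ (2 * q) with hS
  have k1' : (u + t) ^ (2 * q + 1) - u ^ (2 * q + 1) ≤ t * (2 * q + 1) * (2 ^ (2 * q) * S) := by
    refine k1.trans ?_
    rw [e0]
    gcongr
    linarith
  have k2' : (u + t) ^ (2 * q + 1 + 1) - u ^ (2 * q + 1 + 1)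
      ≤ t * (2 * q + 1 + 1) * (2 ^ (2 * q + 1) * S) := by
    refine k2.trans ?_
    gcongr
    linarith
  calc _ = 2 * ((u + t) ^ (2 * q + 1) - u ^ (2 * q + 1))
        + ((u + t) ^ (2 * q + 1 + 1) - u ^ (2 * q + 1 + 1)) := by ring
    _ ≤ 2 * (t * (2 * q + 1) * (2 ^ (2 * q) * S))
        + t * (2 * q + 1 + 1) * (2 ^ (2 * q + 1) * S) := by linarith
    _ = _ := by ring

lemma V_even_OO {ν : ℝ} (hν : 0 < ν) (q : ℕ) : OO ν q (V ν (2 * q)) := by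
  induction q with
  | zero =>
    exact (OO.const (ν := ν) 1).congr fun x => (V_zero hν x).symm
  | succ q ih =>
    obtain ⟨C, hC, hb⟩ := diff_bound q
    have hc : 0 < min 1 ν := lt_min one_pos hν
    set c := min 1 ν with hcdef
    have hO : OO ν (q + 1) (fun x => (2 * C / c) * (h ν x ^ 1 * (V ν (2 * q) x + h ν x ^ (2 * q)))) := by
      have h1 := (OO.hpow ν 1).mul (ih.add ((OO.hpow ν (2 * q)).mono hν (by omega : q ≤ 2 * q)))
      rw [add_comm] at h1
      exact h1.cmul _
    refine IsBigO.trans (IsBigO.of_bound 1 ?_) hO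
    have hsm : ∀ᶠ x in atTop, h ν x ≤ c / (2 * C) :=
      (h_tendsto hν).eventually_le_const (by positivity)
    filter_upwards [h_le_one hν, hsm] with x hx1 hx2
    have ht := h_pos ν x
    set t := h ν x with htdef
    have v0 := V_even_nonneg hν q x
    have v1 := V_even_nonneg hν (q + 1) x
    rw [Real.norm_of_nonneg v1, Real.norm_of_nonneg (by positivity), one_mul]
    have hU := PG.U ν x
    have hf : PG (fun i => U ν x i ^ (2 * q + 1) * (2 + U ν x i)) :=
      (hU.pow _).mul ((PG.const 2).add hU)
    have hf' : PG (fun i => (U ν x i + t) ^ (2 * q + 1) * (2 + (U ν x i + t))) :=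
      ((hU.add (PG.const t)).pow _).mul ((PG.const 2).add (hU.add (PG.const t)))
    have s1 := steinU hν x hf
    have s2 : E ν x (fun i => (1 + U ν x i) ^ ν * (U ν x i ^ (2 * q + 1) * (2 + U ν x i))
        - U ν x i ^ (2 * q + 1) * (2 + U ν x i))
        = E ν x (fun i => (U ν x i + t) ^ (2 * q + 1) * (2 + (U ν x i + t))
          - U ν x i ^ (2 * q + 1) * (2 + U ν x i)) := by
      rw [E_sub hν x ((PG.rpowU ν x).mul hf) hf, s1, E_sub hν x hf' hf]
      simp only [U_succ]
      rfl
    have up : E ν x (fun i => (U ν x i + t) ^ (2 * q + 1) * (2 + (U ν x i + t))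
          - U ν x i ^ (2 * q + 1) * (2 + U ν x i)) ≤
          C * t * (V ν (2 * q) x + V ν (2 * (q + 1)) x + t ^ (2 * q)) := by
      have := E_mono hν x (hf'.sub hf)
        ((((hU.pow (2 * q)).add (hU.pow (2 * q + 2))).add (PG.const (t ^ (2 * q)))).const_mul (C * t))
        (fun i => hb (U ν x i) t ht hx1)
      rw [E_const_mul, E_add hν x ((hU.pow (2 * q)).add (hU.pow (2 * q + 2))) (PG.const _),
        E_add hν x (hU.pow (2 * q)) (hU.pow (2 * q + 2)), E_const hν] at this
      exact this
    have lo : c * V ν (2 * (q + 1)) x ≤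
        E ν x (fun i => (1 + U ν x i) ^ ν * (U ν x i ^ (2 * q + 1) * (2 + U ν x i))
        - U ν x i ^ (2 * q + 1) * (2 + U ν x i)) := by
      have := E_mono hν x ((hU.pow (2 * (q + 1))).const_mul c) (((PG.rpowU ν x).mul hf).sub hf)
        (fun i => by
          have h1 := rpow_ineq hν (v := 1 + U ν x i) (by linarith [U_ge ν x i])
          have h2 : 0 ≤ U ν x i ^ (2 * q) := by rw [pow_mul]; positivity
          have h3 := mul_le_mul_of_nonneg_left h1 h2
          calc c * U ν x i ^ (2 * (q + 1)) = U ν x i ^ (2 * q) * (c * (1 + U ν x i - 1) ^ 2) := by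
                ring
            _ ≤ _ := h3
            _ = _ := by ring)
      rwa [E_const_mul] at this
    rw [s2] at lo
    have fin := lo.trans up
    have h2 : C * t ≤ c / 2 := by
      rw [le_div_iff₀ (by positivity)] at hx2
      linarith
    have h3 : c / 2 * V ν (2 * (q + 1)) x ≤ C * t * (V ν (2 * q) x + t ^ (2 * q)) := by
      nlinarith
    rw [pow_one]
    calc V ν (2 * (q + 1)) x = (2 / c) * (c / 2 * V ν (2 * (q + 1)) x) := by field_simp
      _ ≤ (2 / c) * (C * t * (V ν (2 * q) x + t ^ (2 * q))) := by gcongr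
      _ = _ := by ring

lemma V_OO {ν : ℝ} (hν : 0 < ν) {N k : ℕ} (hk : 2 * N ≤ k) : OO ν N (V ν k) := by
  obtain ⟨q, hq | hq⟩ := Nat.even_or_odd' k
  · subst hq
    exact (V_even_OO hν q).mono hν (by omega)
  · have h1 := (V_even_OO hν q).mono hν (by omega : N ≤ q)
    have h2 := (V_even_OO hν (q + 1)).mono hν (by omega : N ≤ q + 1)
    refine IsBigO.trans (IsBigO.of_bound 1 (Eventually.of_forall fun x => ?_)) (h1.add h2)
    rw [Real.norm_of_nonneg (add_nonneg (V_even_nonneg hν _ _) (V_even_nonneg hν _ _)), one_mul,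
      Real.norm_eq_abs]
    have hU := PG.U ν x
    have := abs_E_le hν x (hU.pow k) ((hU.pow (2 * q)).add (hU.pow (2 * (q + 1)))) (fun i => by
      set u := U ν x i
      have e0 : |u| ^ (2 * q) = u ^ (2 * q) := by rw [pow_mul, pow_mul, sq_abs]
      have : u ^ (2 * (q + 1)) = |u| ^ (2 * q) * |u| ^ 2 := by
        rw [e0, sq_abs, mul_add, pow_add]
      rw [this, ← e0, hq, abs_pow, pow_succ]
      have : 0 ≤ |u| ^ (2 * q) := by positivity
      nlinarith [sq_nonneg (|u| - 1), abs_nonneg u])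
    rw [E_add hν x (hU.pow _) (hU.pow _)] at this
    exact this

/-- binomial coefficients -/
noncomputable def b (ν : ℝ) (j : ℕ) : ℝ := Ring.choose ν j

lemma b_zero (ν : ℝ) : b ν 0 = 1 := Ring.choose_zero_right ν
lemma b_succ (ν : ℝ) (j : ℕ) : b ν (j + 1) = b ν j * (ν - j) / (j + 1) := by
  have := Ring.choose_smul_choose ν (Nat.le_succ j)
  simp only [Nat.succ_eq_add_one, Nat.add_sub_cancel_left, Ring.choose_one_right, nsmul_eq_mul,
    Nat.choose_succ_self_right] at this
  push_cast at this
  unfold b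
  have h1 : (j : ℝ) + 1 ≠ 0 := by positivity
  field_simp
  linarith

lemma taylor {ν : ℝ} (hν : 0 < ν) (N : ℕ) : ∃ (C : ℝ) (L : ℕ), 0 ≤ C ∧ N ≤ L ∧ ∀ u : ℝ, -1 ≤ u →
    |(∑ j ∈ Finset.range (2 * N), b ν j * u ^ j) - (1 + u) ^ ν| ≤ C * (u ^ (2 * N) + u ^ (2 * L)) := by
  have h1 := (Real.one_add_rpow_hasFPowerSeriesAt_zero (a := ν)).isBigO_sub_partialSum_pow (2 * N)
  obtain ⟨C, hC, h2⟩ := h1.exists_pos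
  rw [IsBigOWith, Metric.eventually_nhds_iff] at h2
  obtain ⟨r, hr, h3⟩ := h2
  obtain ⟨L, hL⟩ : ∃ L : ℕ, N ≤ L ∧ ν ≤ 2 * L := by
    refine ⟨max N ⌈ν⌉₊, le_max_left _ _, ?_⟩
    have := Nat.le_ceil ν
    have h5 : ((⌈ν⌉₊ : ℕ) : ℝ) ≤ ((max N ⌈ν⌉₊ : ℕ) : ℝ) := by exact_mod_cast le_max_right _ _
    linarith
  set B := ∑ j ∈ Finset.range (2 * N), |b ν j| with hB
  have hB0 : 0 ≤ B := Finset.sum_nonneg fun _ _ => abs_nonneg _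
  refine ⟨C + (B + 1) * (1 / r + 1) ^ (2 * L), L, by positivity, hL.1, fun u hu => ?_⟩
  have p1 : 0 ≤ u ^ (2 * N) := by rw [pow_mul]; positivity
  have p2 : 0 ≤ u ^ (2 * L) := by rw [pow_mul]; positivity
  have p3 : 0 ≤ (B + 1) * (1 / r + 1) ^ (2 * L) := by positivity
  rcases lt_or_ge |u| r with H | H
  · have h4 := h3 (y := u) (by simpa [Real.dist_eq] using H)
    simp only [FormalMultilinearSeries.partialSum, binomialSeries_apply, zero_add,
      List.ofFn_const, List.prod_replicate, smul_eq_mul, norm_pow, norm_norm] at h4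
    rw [abs_sub_comm]
    rw [Real.norm_eq_abs, Real.norm_eq_abs, pow_mul |u|, sq_abs, ← pow_mul] at h4
    calc _ ≤ _ := h4
      _ ≤ _ := by nlinarith [mul_nonneg hC.le p2, mul_nonneg p3 p1, mul_nonneg p3 p2]
  · have hu1 : 1 ≤ 1 + |u| := by linarith [abs_nonneg u]
    have a1 : |(1 + u) ^ ν| ≤ (1 + |u|) ^ (2 * L) := by
      rw [abs_of_nonneg (Real.rpow_nonneg (by linarith) _)]
      calc (1 + u) ^ ν ≤ (1 + |u|) ^ ν :=
            Real.rpow_le_rpow (by linarith) (by linarith [le_abs_self u]) hν.le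
        _ ≤ (1 + |u|) ^ (((2 * L : ℕ)) : ℝ) :=
            Real.rpow_le_rpow_of_exponent_le hu1 (by push_cast; exact hL.2)
        _ = _ := Real.rpow_natCast _ _
    have a2 : |∑ j ∈ Finset.range (2 * N), b ν j * u ^ j| ≤ B * (1 + |u|) ^ (2 * L) := by
      refine (Finset.abs_sum_le_sum_abs _ _).trans ?_
      rw [hB, Finset.sum_mul]
      refine Finset.sum_le_sum fun j hj => ?_
      rw [abs_mul, abs_pow]
      rw [Finset.mem_range] at hj
      have : |u| ^ j ≤ (1 + |u|) ^ (2 * L) :=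
        (pow_le_pow_left₀ (abs_nonneg u) (by linarith) j).trans
          (pow_le_pow_right₀ hu1 (by omega))
      gcongr
    have a3 : (1 + |u|) ^ (2 * L) ≤ (1 / r + 1) ^ (2 * L) * u ^ (2 * L) := by
      have : u ^ (2 * L) = |u| ^ (2 * L) := by rw [pow_mul, pow_mul, sq_abs]
      rw [this, ← mul_pow]
      have h7 : 1 ≤ 1 / r * |u| := by
        rw [one_div, inv_mul_eq_div, le_div_iff₀ hr]; linarith
      gcongr
      linarith
    calc _ ≤ |∑ j ∈ Finset.range (2 * N), b ν j * u ^ j| + |(1 + u) ^ ν| := abs_sub _ _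
      _ ≤ (B + 1) * (1 + |u|) ^ (2 * L) := by linarith
      _ ≤ (B + 1) * ((1 / r + 1) ^ (2 * L) * u ^ (2 * L)) := by gcongr
      _ ≤ _ := by nlinarith [mul_nonneg hC.le p2, mul_nonneg hC.le p1, mul_nonneg p3 p1]

lemma relation {ν : ℝ} (hν : 0 < ν) (k N : ℕ) :
    OO ν N (fun x => (∑ j ∈ Finset.range (2 * N), b ν j * V ν (k + j) x)
      - ∑ i ∈ Finset.range (k + 1), (k.choose i : ℝ) * (h ν x ^ (k - i) * V ν i x)) := by
  obtain ⟨C, L, hC, hL, hT⟩ := taylor hν N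
  have hO := (((V_OO hν (le_refl (2 * N))).add (V_OO hν (by omega : 2 * N ≤ 2 * (N + k)))).add
    ((V_OO hν (by omega : 2 * N ≤ 2 * L)).add (V_OO hν (by omega : 2 * N ≤ 2 * (L + k))))).cmul C
  refine IsBigO.trans (IsBigO.of_bound 1 (Eventually.of_forall fun x => ?_)) hO
  have hU := PG.U ν x
  have v1 := V_even_nonneg hν N x
  have v2 := V_even_nonneg hν (N + k) x
  have v3 := V_even_nonneg hν L x
  have v4 := V_even_nonneg hν (L + k) x
  rw [one_mul, Real.norm_eq_abs, Real.norm_of_nonneg (by positivity)]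
  have hS : PG (fun i => ∑ j ∈ Finset.range (2 * N), b ν j * U ν x i ^ (k + j)) :=
    PG.sum _ fun j => (hU.pow _).const_mul _
  have e1 : (∑ j ∈ Finset.range (2 * N), b ν j * V ν (k + j) x) =
      E ν x (fun i => ∑ j ∈ Finset.range (2 * N), b ν j * U ν x i ^ (k + j)) := by
    rw [E_sum hν x _ fun j => (hU.pow _).const_mul _]
    simp only [E_const_mul]
    rfl
  have e2 : (∑ i ∈ Finset.range (k + 1), (k.choose i : ℝ) * (h ν x ^ (k - i) * V ν i x)) =
      E ν x (fun i => (1 + U ν x i) ^ ν * U ν x i ^ k) := by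
    rw [steinU hν x (hU.pow k)]
    simp only [U_succ, add_pow]
    rw [E_sum hν x (f := fun j i => U ν x i ^ j * h ν x ^ (k - j) * (k.choose j : ℝ)) _
      fun j => ((hU.pow _).mul (PG.const _)).mul (PG.const _)]
    refine Finset.sum_congr rfl fun j _ => ?_
    unfold V
    rw [← E_const_mul, ← E_const_mul]
    congr 1
    funext i
    ring
  rw [e1, e2, ← E_sub hν x hS ((PG.rpowU ν x).mul (hU.pow k))]
  have := abs_E_le hν x (hS.sub ((PG.rpowU ν x).mul (hU.pow k)))
    ((((hU.pow (2 * N)).add (hU.pow (2 * (N + k)))).add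
      ((hU.pow (2 * L)).add (hU.pow (2 * (L + k))))).const_mul C) (fun i => by
      have h1 := hT (U ν x i) (U_ge ν x i)
      set u := U ν x i
      have h2 : |u| ^ k ≤ 1 + u ^ (2 * k) := by
        have : u ^ (2 * k) = (|u| ^ k) ^ 2 := by rw [← pow_mul, mul_comm k 2, pow_mul, pow_mul, sq_abs]
        rw [this]
        nlinarith [sq_nonneg (|u| ^ k - 1)]
      have e : (∑ j ∈ Finset.range (2 * N), b ν j * u ^ (k + j)) - (1 + u) ^ ν * u ^ k
          = ((∑ j ∈ Finset.range (2 * N), b ν j * u ^ j) - (1 + u) ^ ν) * u ^ k := by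
        rw [sub_mul, Finset.sum_mul]
        congr 1
        refine Finset.sum_congr rfl fun j _ => ?_
        ring
      have p1 : 0 ≤ u ^ (2 * N) := by rw [pow_mul]; positivity
      have p2 : 0 ≤ u ^ (2 * L) := by rw [pow_mul]; positivity
      rw [e, abs_mul, abs_pow]
      calc _ ≤ (C * (u ^ (2 * N) + u ^ (2 * L))) * (1 + u ^ (2 * k)) := by gcongr
        _ = _ := by ring)
  rw [E_const_mul, E_add hν x ((hU.pow _).add (hU.pow _)) ((hU.pow _).add (hU.pow _)),
    E_add hν x (hU.pow _) (hU.pow _), E_add hν x (hU.pow _) (hU.pow _)] at this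
  exact this

end CMPAux

namespace CMPAux
open Filter Topology Asymptotics

/-- descending linear recursion -/
lemma lin {ν : ℝ} (hν : 0 < ν) (N0 : ℕ) (hN0 : 1 ≤ N0) (W : ℕ → ℝ → ℝ)
    (hbig : ∀ k, 2 * N0 ≤ k → OO ν N0 (W k)) (hzero : OO ν N0 (W 0))
    (hbd : ∀ k, OO ν 0 (W k))
    (hrel : ∀ k, k + 1 < 2 * N0 →
      OO ν N0 (fun x => (∑ j ∈ Finset.range (2 * N0), b ν j * W (k + j) x)
      - ∑ i ∈ Finset.range (k + 1), (k.choose i : ℝ) * (h ν x ^ (k - i) * W i x))) :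
    ∀ k, OO ν N0 (W k) := by
  have main : ∀ N, N ≤ N0 → ∀ k, OO ν N (W k) := by
    intro N
    induction N with
    | zero => exact fun _ => hbd
    | succ N ih =>
      intro hN
      have ih' := ih (by omega)
      have down : ∀ d k, 2 * N0 ≤ k + d → OO ν (N + 1) (W k) := by
        intro d
        induction d with
        | zero => exact fun k hk => (hbig k hk).mono hν hN
        | succ d ihd =>
          intro k hk
          rcases Nat.eq_zero_or_pos k with h0 | hpos
          · subst h0; exact hzero.mono hν hN
          by_cases hkb : 2 * N0 ≤ k
          · exact (hbig k hkb).mono hν hN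
          obtain ⟨k, rfl⟩ : ∃ k', k = k' + 1 := ⟨k - 1, by omega⟩
          have hr := (hrel k (by omega)).mono hν hN
          obtain ⟨M, hM⟩ : ∃ M, 2 * N0 = M + 1 + 1 := ⟨2 * N0 - 2, by omega⟩
          rw [hM] at hr
          have s1 : OO ν (N + 1) (fun x => ∑ j ∈ Finset.range M, b ν (j + 1 + 1) * W (k + (j + 1 + 1)) x) :=
            OO.sum _ fun j _ => (ihd _ (by omega)).cmul _
          have s2 : OO ν (N + 1) (fun x => ∑ i ∈ Finset.range k,
              (k.choose i : ℝ) * (h ν x ^ (k - i) * W i x)) :=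
            OO.sum _ fun i hi => by
              rw [Finset.mem_range] at hi
              exact (((OO.hpow ν (k - i)).mul (ih' i)).mono hν (by omega)).cmul _
          refine (((hr.sub s1).add s2).cmul (1 / ν)).congr fun x => ?_
          rw [Finset.sum_range_succ', Finset.sum_range_succ', Finset.sum_range_succ _ k]
          simp only [b_zero, b_succ ν 0, zero_add, Nat.choose_self, Nat.sub_self]
          generalize (∑ j ∈ Finset.range M, b ν (j + 1 + 1) * W (k + (j + 1 + 1)) x) = S1
          generalize (∑ i ∈ Finset.range k, (k.choose i : ℝ) * (h ν x ^ (k - i) * W i x)) = S2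
          push_cast
          simp only [add_zero]
          field_simp
          ring
      exact fun k => down (2 * N0) k (by omega)
  exact main N0 le_rfl

/-- approximations to the scaled moments -/
noncomputable def P (ν t : ℝ) : ℕ → ℝ
  | 0 => 1
  | 1 => (1 - ν) / (2 * ν) * t + (1 - ν ^ 2) / (24 * ν ^ 2) * t ^ 2
      + (1 - ν ^ 2) / (24 * ν ^ 3) * t ^ 3
  | 2 => 1 / ν * t + (1 - 2 * ν + ν ^ 2) / (4 * ν ^ 2) * t ^ 2
      + (-1 + ν ^ 2) / (24 * ν ^ 2) * t ^ 3
  | 3 => (5 - 3 * ν) / (2 * ν ^ 2) * t ^ 2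
      + (2 - 3 * ν + 2 * ν ^ 2 - ν ^ 3) / (8 * ν ^ 3) * t ^ 3
  | 4 => 3 / ν ^ 2 * t ^ 2 + (9 - 10 * ν + 3 * ν ^ 2) / (2 * ν ^ 3) * t ^ 3
  | 5 => (35 - 15 * ν) / (2 * ν ^ 3) * t ^ 3
  | 6 => 15 / ν ^ 3 * t ^ 3
  | _ => 0

lemma OO_poly {ν : ℝ} (hν : 0 < ν) (p : Polynomial ℝ) : OO ν 0 (fun x => p.eval (h ν x)) := by
  have : Tendsto (fun x => p.eval (h ν x)) atTop (𝓝 (p.eval 0)) :=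
    (p.continuous.tendsto 0).comp (h_tendsto hν)
  simpa [OO] using this.isBigO_one ℝ

lemma OO_quot {ν : ℝ} (hν : 0 < ν) (a0 a1 a2 a3 a4 : ℝ) : OO ν 4 (fun x => h ν x ^ 4 *
    (a0 + a1 * h ν x + a2 * h ν x ^ 2 + a3 * h ν x ^ 3 + a4 * h ν x ^ 4)) := by
  have := (OO.hpow ν 4).mul (OO_poly hν (Polynomial.C a0 + Polynomial.C a1 * Polynomial.X
    + Polynomial.C a2 * Polynomial.X ^ 2 + Polynomial.C a3 * Polynomial.X ^ 3
    + Polynomial.C a4 * Polynomial.X ^ 4))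
  simpa using this

lemma P_OO_zero {ν : ℝ} (hν : 0 < ν) (k : ℕ) : OO ν 0 (fun x => P ν (h ν x) k) := by
  have hp : ∀ c0 c1 c2 c3 : ℝ, OO ν 0 (fun x => c0 + c1 * h ν x + c2 * h ν x ^ 2 + c3 * h ν x ^ 3) := by
    intro c0 c1 c2 c3
    have := OO_poly hν (Polynomial.C c0 + Polynomial.C c1 * Polynomial.X
      + Polynomial.C c2 * Polynomial.X ^ 2 + Polynomial.C c3 * Polynomial.X ^ 3)
    simpa using this
  match k with
  | 0 => exact (hp 1 0 0 0).congr fun x => by simp [P]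
  | 1 => exact (hp 0 _ _ _).congr fun x => by simp only [P, zero_add]; rfl
  | 2 => exact (hp 0 _ _ _).congr fun x => by simp only [P, zero_add]; rfl
  | 3 => exact (hp 0 0 _ _).congr fun x => by simp only [P, zero_mul, zero_add]; rfl
  | 4 => exact (hp 0 0 _ _).congr fun x => by simp only [P, zero_mul, zero_add]; rfl
  | 5 => exact (hp 0 0 0 _).congr fun x => by simp only [P, zero_mul, zero_add]; rfl
  | 6 => exact (hp 0 0 0 _).congr fun x => by simp only [P, zero_mul, zero_add]; rfl
  | n + 7 => exact (hp 0 0 0 0).congr fun x => by simp [P]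

lemma P_rel {ν : ℝ} (hν : 0 < ν) (k : ℕ) (hk : k + 1 < 2 * 4) :
    OO ν 4 (fun x => (∑ j ∈ Finset.range (2 * 4), b ν j * P ν (h ν x) (k + j))
      - ∑ i ∈ Finset.range (k + 1), (k.choose i : ℝ) * (h ν x ^ (k - i) * P ν (h ν x) i)) := by
  have b1 := b_succ ν 0
  have b2 := b_succ ν 1
  have b3 := b_succ ν 2
  have b4 := b_succ ν 3
  have b5 := b_succ ν 4
  have b6 := b_succ ν 5
  norm_num only [] at b1 b2 b3 b4 b5 b6
  have hk' : k < 7 := by omega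
  interval_cases k
  · refine (OO_quot hν 0 0 0 0 0).congr fun x => ?_
    generalize h ν x = t
    norm_num [Finset.sum_range_succ, P, Nat.choose, b_zero, b1, b2, b3, b4, b5, b6]
    field_simp
    ring
  · refine (OO_quot hν 0 0 0 0 0).congr fun x => ?_
    generalize h ν x = t
    norm_num [Finset.sum_range_succ, P, Nat.choose, b_zero, b1, b2, b3, b4, b5, b6]
    field_simp
    ring
  · refine (OO_quot hν ((-1 + ν ^ 2) / (12 * ν ^ 3)) 0 0 0 0).congr fun x => ?_
    generalize h ν x = t
    norm_num [Finset.sum_range_succ, P, Nat.choose, b_zero, b1, b2, b3, b4, b5, b6]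
    field_simp
    ring
  · refine (OO_quot hν 0 ((-1 + ν ^ 2) / (8 * ν ^ 3)) 0 0 0).congr fun x => ?_
    generalize h ν x = t
    norm_num [Finset.sum_range_succ, P, Nat.choose, b_zero, b1, b2, b3, b4, b5, b6]
    field_simp
    ring
  · refine (OO_quot hν (-1 / ν ^ 3) ((1 - ν ^ 2) / (12 * ν ^ 2))
      ((-1 + ν ^ 2) / (6 * ν ^ 3)) 0 0).congr fun x => ?_
    generalize h ν x = t
    norm_num [Finset.sum_range_succ, P, Nat.choose, b_zero, b1, b2, b3, b4, b5, b6]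
    field_simp
    ring
  · refine (OO_quot hν ((-45 - 5 * ν ^ 2) / (2 * ν ^ 3)) ((-10 + 5 * ν + ν ^ 3) / (4 * ν ^ 3))
      ((5 - 5 * ν ^ 2) / (24 * ν ^ 2)) ((-5 + 5 * ν ^ 2) / (24 * ν ^ 3)) 0).congr fun x => ?_
    generalize h ν x = t
    norm_num [Finset.sum_range_succ, P, Nat.choose, b_zero, b1, b2, b3, b4, b5, b6]
    field_simp
    ring
  · refine (OO_quot hν (-105 / ν ^ 3) ((-135 + 50 * ν - 15 * ν ^ 2) / (2 * ν ^ 3))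
      ((-20 + 15 * ν - 2 * ν ^ 2 + 3 * ν ^ 3) / (4 * ν ^ 3))
      ((3 - 3 * ν ^ 2) / (8 * ν ^ 2)) ((-1 + ν ^ 2) / (4 * ν ^ 3))).congr fun x => ?_
    generalize h ν x = t
    norm_num [Finset.sum_range_succ, P, Nat.choose, b_zero, b1, b2, b3, b4, b5, b6]
    field_simp
    ring

lemma V_approx {ν : ℝ} (hν : 0 < ν) (k : ℕ) : OO ν 4 (fun x => V ν k x - P ν (h ν x) k) := by
  refine lin hν 4 (by norm_num) (fun k x => V ν k x - P ν (h ν x) k) ?_ ?_ ?_ ?_ k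
  · intro k hk
    obtain ⟨n, rfl⟩ : ∃ n, k = n + 7 := ⟨k - 7, by omega⟩
    exact (V_OO hν hk).congr fun x => by simp [P]
  · exact (OO.zero ν 4).congr fun x => by simp [P, V_zero hν]
  · exact fun k => (V_OO hν (by omega)).sub (P_OO_zero hν k)
  · intro k hk
    refine ((relation hν k 4).sub (P_rel hν k hk)).congr fun x => ?_
    simp only [mul_sub, Finset.sum_sub_distrib]
    ring

end CMPAux

namespace CMPAux
open Filter Topology Asymptotics

/-- polynomial expansion to order `N` -/
def PEN (ν : ℝ) (N : ℕ) (F : ℝ → ℝ) : Prop :=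
  ∃ p : Polynomial ℝ, OO ν N (fun x => F x - p.eval (h ν x))

lemma PEN.of_OO {ν : ℝ} {N : ℕ} {F : ℝ → ℝ} (hF : OO ν N F) : PEN ν N F :=
  ⟨0, hF.congr fun x => by simp⟩
lemma PEN.congr {ν : ℝ} {N : ℕ} {f g : ℝ → ℝ} (hf : PEN ν N f) (H : ∀ x, f x = g x) :
    PEN ν N g := by
  rwa [← funext H]
lemma PEN.mono {ν : ℝ} (hν : 0 < ν) {N M : ℕ} {f : ℝ → ℝ} (hf : PEN ν N f) (hM : M ≤ N) :
    PEN ν M f := by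
  obtain ⟨p, hp⟩ := hf
  exact ⟨p, hp.mono hν hM⟩
lemma PEN.const (ν : ℝ) (N : ℕ) (c : ℝ) : PEN ν N (fun _ => c) :=
  ⟨Polynomial.C c, (OO.zero ν N).congr fun x => by simp⟩
lemma PEN.add {ν : ℝ} {N : ℕ} {F G : ℝ → ℝ} (hF : PEN ν N F) (hG : PEN ν N G) :
    PEN ν N (fun x => F x + G x) := by
  obtain ⟨p, hp⟩ := hF
  obtain ⟨q, hq⟩ := hG
  exact ⟨p + q, (hp.add hq).congr fun x => by simp; ring⟩
lemma PEN.cmul {ν : ℝ} {N : ℕ} {F : ℝ → ℝ} (c : ℝ) (hF : PEN ν N F) :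
    PEN ν N (fun x => c * F x) := by
  obtain ⟨p, hp⟩ := hF
  exact ⟨Polynomial.C c * p, (hp.cmul c).congr fun x => by simp; ring⟩
lemma PEN.sum {ν : ℝ} {N : ℕ} {ι : Type} (s : Finset ι) {f : ι → ℝ → ℝ}
    (hf : ∀ j ∈ s, PEN ν N (f j)) : PEN ν N (fun x => ∑ j ∈ s, f j x) := by
  classical
  induction s using Finset.induction_on with
  | empty => simpa using PEN.const ν N 0
  | insert a s ha ih =>
    refine ((hf a (by simp)).add (ih fun j hj => hf j (by simp [hj]))).congr fun x => ?_
    rw [Finset.sum_insert ha]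
lemma PEN.hpow_mul {ν : ℝ} {N : ℕ} {F : ℝ → ℝ} (k : ℕ) (hF : PEN ν N F) :
    PEN ν (k + N) (fun x => h ν x ^ k * F x) := by
  obtain ⟨p, hp⟩ := hF
  exact ⟨Polynomial.X ^ k * p, ((OO.hpow ν k).mul hp).congr fun x => by simp; ring⟩
lemma PEN.mul {ν : ℝ} (hν : 0 < ν) {N : ℕ} {F G : ℝ → ℝ} (hF : PEN ν N F) (hG : PEN ν N G) :
    PEN ν N (fun x => F x * G x) := by
  obtain ⟨p, hp⟩ := hF
  obtain ⟨q, hq⟩ := hG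
  have hG0 : OO ν 0 G := ((hq.mono hν (Nat.zero_le _)).add (OO_poly hν q)).congr fun x => by ring
  refine ⟨p * q, ((hp.mul hG0).add (((OO_poly hν p).mul hq).mono hν (by omega))).congr fun x => ?_⟩
  simp only [Polynomial.eval_mul]
  ring

lemma V_PEN {ν : ℝ} (hν : 0 < ν) : ∀ N k, PEN ν N (V ν k) := by
  intro N
  induction N with
  | zero => exact fun k => PEN.of_OO (V_OO hν (by omega))
  | succ N ih =>
    have down : ∀ d k, 2 * (N + 1) ≤ k + d → PEN ν (N + 1) (V ν k) := by
      intro d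
      induction d with
      | zero => exact fun k hk => PEN.of_OO (V_OO hν hk)
      | succ d ihd =>
        intro k hk
        rcases Nat.eq_zero_or_pos k with h0 | hpos
        · subst h0
          exact (PEN.const ν (N + 1) 1).congr fun x => (V_zero hν x).symm
        obtain ⟨k, rfl⟩ : ∃ k', k = k' + 1 := ⟨k - 1, by omega⟩
        have hr := PEN.of_OO (relation hν k (N + 1))
        rw [show 2 * (N + 1) = 2 * N + 1 + 1 by ring] at hr
        have s1 : PEN ν (N + 1) (fun x => ∑ j ∈ Finset.range (2 * N),
            b ν (j + 1 + 1) * V ν (k + (j + 1 + 1)) x) :=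
          PEN.sum _ fun j _ => (ihd _ (by omega)).cmul _
        have s2 : PEN ν (N + 1) (fun x => ∑ i ∈ Finset.range k,
            (k.choose i : ℝ) * (h ν x ^ (k - i) * V ν i x)) :=
          PEN.sum _ fun i hi => by
            rw [Finset.mem_range] at hi
            exact (((ih i).hpow_mul (k - i)).mono hν (by omega)).cmul _
        refine (((hr.add (s1.cmul (-1))).add s2).cmul (1 / ν)).congr fun x => ?_
        rw [Finset.sum_range_succ', Finset.sum_range_succ', Finset.sum_range_succ _ k]
        simp only [b_zero, b_succ ν 0, zero_add, Nat.choose_self, Nat.sub_self]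
        generalize (∑ j ∈ Finset.range (2 * N), b ν (j + 1 + 1) * V ν (k + (j + 1 + 1)) x) = S1
        generalize (∑ i ∈ Finset.range k, (k.choose i : ℝ) * (h ν x ^ (k - i) * V ν i x)) = S2
        push_cast
        simp only [add_zero]
        field_simp
        ring
    exact fun k => down (2 * (N + 1)) k (by omega)

/-- full Laurent expansion -/
def EL (ν : ℝ) (F : ℝ → ℝ) : Prop := ∃ A : ℕ, ∀ N, PEN ν N (fun x => h ν x ^ A * F x)

lemma EL.congr {ν : ℝ} {f g : ℝ → ℝ} (hf : EL ν f) (H : ∀ x, f x = g x) : EL ν g := by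
  rwa [← funext H]
lemma EL.const (ν c : ℝ) : EL ν (fun _ => c) :=
  ⟨0, fun N => (PEN.const ν N c).congr fun x => by simp⟩
lemma EL.hpow {ν : ℝ} (hν : 0 < ν) (k : ℕ) : EL ν (fun x => h ν x ^ k) :=
  ⟨0, fun N => (((PEN.const ν N 1).hpow_mul k).mono hν (by omega)).congr fun x => by simp⟩
lemma EL.hinv (ν : ℝ) : EL ν (fun x => (h ν x)⁻¹) :=
  ⟨1, fun N => (PEN.const ν N 1).congr fun x => by
    have := (h_pos ν x).ne'
    field_simp⟩
lemma EL.add {ν : ℝ} (hν : 0 < ν) {F G : ℝ → ℝ} (hF : EL ν F) (hG : EL ν G) :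
    EL ν (fun x => F x + G x) := by
  obtain ⟨A, hA⟩ := hF
  obtain ⟨B, hB⟩ := hG
  refine ⟨A + B, fun N => ?_⟩
  refine ((((hA N).hpow_mul B).mono hν (by omega)).add
    (((hB N).hpow_mul A).mono hν (by omega))).congr fun x => ?_
  ring
lemma EL.mul {ν : ℝ} (hν : 0 < ν) {F G : ℝ → ℝ} (hF : EL ν F) (hG : EL ν G) :
    EL ν (fun x => F x * G x) := by
  obtain ⟨A, hA⟩ := hF
  obtain ⟨B, hB⟩ := hG
  refine ⟨A + B, fun N => ?_⟩
  refine ((hA N).mul hν (hB N)).congr fun x => ?_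
  ring

lemma hpow_mu {ν : ℝ} (hν : 0 < ν) (k : ℕ) (x : ℝ) :
    h ν x ^ k * mu ν k x = ∑ j ∈ Finset.range (k + 1), (k.choose j : ℝ) * V ν j x := by
  unfold mu V
  rw [← E_const_mul]
  simp only [← E_const_mul]
  rw [← E_sum hν x (f := fun j i => (k.choose j : ℝ) * U ν x i ^ j) _
    fun j => ((PG.U ν x).pow _).const_mul _]
  congr 1
  funext i
  rw [← mul_pow, ← one_add_U, add_comm, add_pow]
  refine Finset.sum_congr rfl fun j _ => ?_
  simp
  ring

lemma EL.mu {ν : ℝ} (hν : 0 < ν) (k : ℕ) : EL ν (mu ν k) :=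
  ⟨k, fun N => (PEN.sum _ fun j _ => (V_PEN hν N j).cmul _).congr fun x => (hpow_mu hν k x).symm⟩

/-- functions generated by the moments -/
inductive Alg (ν : ℝ) : (ℝ → ℝ) → Prop
  | mu (k : ℕ) : Alg ν (mu ν k)
  | const (c : ℝ) : Alg ν (fun _ => c)
  | add {F G : ℝ → ℝ} : Alg ν F → Alg ν G → Alg ν (fun x => F x + G x)
  | mul {F G : ℝ → ℝ} : Alg ν F → Alg ν G → Alg ν (fun x => F x * G x)

lemma Alg.EL {ν : ℝ} (hν : 0 < ν) {F : ℝ → ℝ} (hF : Alg ν F) : EL ν F := by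
  induction hF with
  | mu k => exact EL.mu hν k
  | const c => exact EL.const ν c
  | add _ _ h1 h2 => exact h1.add hν h2
  | mul _ _ h1 h2 => exact h1.mul hν h2

lemma Alg.deriv {ν : ℝ} (hν : 0 < ν) {F : ℝ → ℝ} (hF : Alg ν F) :
    ∃ G, Alg ν G ∧ ∀ x, HasDerivAt F (G x) x := by
  induction hF with
  | mu k => exact ⟨_, (Alg.mu (k + 1)).add ((Alg.const (-1)).mul ((Alg.mu 1).mul (Alg.mu k))),
      fun x => hasDerivAt_mu hν x k⟩
  | const c => exact ⟨_, Alg.const 0, fun x => hasDerivAt_const x c⟩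
  | add _ _ h1 h2 =>
    obtain ⟨G1, a1, d1⟩ := h1
    obtain ⟨G2, a2, d2⟩ := h2
    exact ⟨_, a1.add a2, fun x => (d1 x).add (d2 x)⟩
  | mul m1 m2 h1 h2 =>
    obtain ⟨G1, a1, d1⟩ := h1
    obtain ⟨G2, a2, d2⟩ := h2
    exact ⟨_, (a1.mul m2).add (m1.mul a2), fun x => (d1 x).mul (d2 x)⟩

lemma OO.div {ν : ℝ} {N A : ℕ} {F : ℝ → ℝ} (hF : OO ν (A + N) (fun x => h ν x ^ A * F x)) :
    OO ν N F := by
  have h1 : (fun x => ((h ν x)⁻¹) ^ A) =O[atTop] (fun x => ((h ν x)⁻¹) ^ A) := isBigO_refl _ _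
  have h2 := IsBigO.mul h1 hF
  refine h2.congr (fun x => ?_) (fun x => ?_)
  · have := (h_pos ν x).ne'
    rw [← mul_assoc, ← mul_pow, inv_mul_cancel₀ this, one_pow, one_mul]
  · have := (h_pos ν x).ne'
    rw [pow_add, ← mul_assoc, ← mul_pow, inv_mul_cancel₀ this, one_pow, one_mul]

lemma dichotomy {ν : ℝ} (hν : 0 < ν) {F : ℝ → ℝ} (hF : EL ν F) (N : ℕ) :
    OO ν (N + 1) F ∨ ∃ c > 0, ∀ᶠ x in atTop, c * h ν x ^ N ≤ |F x| := by
  obtain ⟨A, hA⟩ := hF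
  obtain ⟨p, hp⟩ := hA (A + (N + 1))
  by_cases hdvd : (Polynomial.X : Polynomial ℝ) ^ (A + (N + 1)) ∣ p
  · left
    obtain ⟨q, rfl⟩ := hdvd
    refine OO.div (A := A) ?_
    refine (hp.add ((OO.hpow ν (A + (N + 1))).mul (OO_poly hν q))).congr fun x => ?_
    simp
  · right
    have hp0 : p ≠ 0 := by rintro rfl; simp at hdvd
    obtain ⟨q, hq, hq0⟩ := Polynomial.exists_eq_pow_rootMultiplicity_mul_and_not_dvd p hp0 0
    rw [Polynomial.dvd_iff_isRoot, Polynomial.IsRoot.def] at hq0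
    set r := p.rootMultiplicity 0
    rw [Polynomial.C_0, sub_zero] at hq
    have hr : r ≤ A + N := by
      by_contra hlt
      apply hdvd
      rw [hq]
      exact Dvd.dvd.mul_right (pow_dvd_pow _ (by omega)) _
    set c := |q.eval 0| / 2 with hc
    have hcpos : 0 < c := by have := abs_pos.mpr hq0; positivity
    have hten : Tendsto (fun x => |q.eval (h ν x)|) atTop (𝓝 |q.eval 0|) :=
      ((q.continuous.tendsto 0).comp (h_tendsto hν)).abs
    have hev : ∀ᶠ x in atTop, c ≤ |q.eval (h ν x)| :=
      hten.eventually_const_le (by rw [hc]; linarith [abs_pos.mpr hq0])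
    obtain ⟨K, hK, hKb⟩ := hp.exists_pos
    have hsm : ∀ᶠ x in atTop, h ν x ≤ c / (2 * K) :=
      (h_tendsto hν).eventually_le_const (by positivity)
    refine ⟨c / 2, by positivity, ?_⟩
    filter_upwards [hev, hKb.bound, hsm, h_le_one hν] with x h1 h2 h3 h4
    have ht := h_pos ν x
    set t := h ν x
    rw [Real.norm_eq_abs, Real.norm_of_nonneg (by positivity)] at h2
    have e1 : p.eval t = t ^ r * q.eval t := by rw [hq]; simp
    have e2 : c * t ^ (A + N) ≤ |p.eval t| := by
      rw [e1, abs_mul, abs_of_pos (by positivity), mul_comm]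
      have : t ^ (A + N) ≤ t ^ r := pow_le_pow_of_le_one ht.le h4 hr
      gcongr
    have e3 : K * t ^ (A + (N + 1)) ≤ c / 2 * t ^ (A + N) := by
      rw [le_div_iff₀ (by positivity)] at h3
      have : K * t ≤ c / 2 := by linarith
      calc K * t ^ (A + (N + 1)) = (K * t) * t ^ (A + N) := by ring
        _ ≤ _ := by gcongr
    have e4 : |p.eval t| - |t ^ A * F x - p.eval t| ≤ |t ^ A * F x| := by
      have := abs_sub_abs_le_abs_sub (p.eval t) (p.eval t - t ^ A * F x)
      rw [sub_sub_cancel, abs_sub_comm (p.eval t)] at this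
      exact this
    have e5 : t ^ A * (c / 2 * t ^ N) ≤ t ^ A * |F x| := by
      rw [abs_mul, abs_of_pos (by positivity : 0 < t ^ A)] at e4
      calc t ^ A * (c / 2 * t ^ N) = c / 2 * t ^ (A + N) := by ring
        _ ≤ _ := by linarith
    exact le_of_mul_le_mul_left e5 (by positivity)

lemma h_anti {ν : ℝ} (hν : 0 < ν) {x y : ℝ} (hxy : x ≤ y) : h ν y ≤ h ν x := by
  unfold h
  rw [Real.exp_le_exp, neg_le_neg_iff]
  gcongr

lemma OO_deriv {ν : ℝ} (hν : 0 < ν) {F G : ℝ → ℝ} (hd : ∀ x, HasDerivAt F (G x) x)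
    (hG : EL ν G) {N : ℕ} (hF : OO ν (N + 1) F) : OO ν (N + 1) G := by
  rcases dichotomy hν hG N with H | ⟨c, hc, H⟩
  · exact H
  · exfalso
    obtain ⟨K, hK, hKb⟩ := IsBigO.exists_pos hF
    obtain ⟨X0, hX0⟩ := eventually_atTop.mp (H.and hKb.bound)
    set e := h ν 1 with he
    have hepos : 0 < e := h_pos ν 1
    have hsm : ∀ᶠ x in atTop, h ν x < c * e ^ N / (2 * K) :=
      (h_tendsto hν).eventually_lt_const (by positivity)
    obtain ⟨x, hx1, hx2⟩ := (hsm.and (eventually_ge_atTop X0)).exists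
    obtain ⟨ξ, hξ, hξe⟩ := exists_hasDerivAt_eq_slope F G (show x < x + 1 by linarith)
      (fun y _ => (hd y).continuousAt.continuousWithinAt) (fun y _ => hd y)
    have g1 := (hX0 ξ (by linarith [hξ.1])).1
    have f1 := (hX0 x hx2).2
    have f2 := (hX0 (x + 1) (by linarith)).2
    have ht := h_pos ν x
    have ht1 := h_pos ν (x + 1)
    rw [Real.norm_eq_abs, Real.norm_of_nonneg (by positivity)] at f1 f2
    have a1 : h ν (x + 1) ≤ h ν ξ := h_anti hν hξ.2.le
    have a2 : h ν (x + 1) ≤ h ν x := h_anti hν (by linarith)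
    have a3 : h ν (x + 1) = h ν x * e := by
      rw [he]; unfold h; rw [← Real.exp_add]; congr 1; ring
    have b1 : c * (h ν x * e) ^ N ≤ |G ξ| := by
      rw [← a3]
      refine le_trans ?_ g1
      gcongr
    have b2 : |G ξ| ≤ 2 * K * h ν x ^ (N + 1) := by
      rw [hξe]
      simp only [add_sub_cancel_left, div_one]
      have : h ν (x + 1) ^ (N + 1) ≤ h ν x ^ (N + 1) := by gcongr
      have := mul_le_mul_of_nonneg_left this hK.le
      calc _ ≤ |F (x + 1)| + |F x| := abs_sub _ _
        _ ≤ _ := by linarith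
    have b3 := b1.trans b2
    rw [lt_div_iff₀ (by positivity)] at hx1
    have b4 : h ν x ^ N * (c * e ^ N) ≤ h ν x ^ N * (h ν x * (2 * K)) := by
      calc _ = c * (h ν x * e) ^ N := by rw [mul_pow]; ring
        _ ≤ _ := b3
        _ = _ := by ring
    have := le_of_mul_le_mul_left b4 (by positivity)
    linarith

/-- explicit approximations of the cumulants -/
noncomputable def ee (ν α β γ : ℝ) (n : ℕ) (x : ℝ) : ℝ :=
  (1 / ν) ^ n * ((h ν x)⁻¹ + (-1) ^ n * β * h ν x ^ 1 + (-2) ^ n * γ * h ν x ^ 2)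
    + (if n = 0 then α else 0)

lemma hasDerivAt_h (ν x : ℝ) : HasDerivAt (h ν) (h ν x * (-(1 / ν))) x := by
  unfold h
  exact ((hasDerivAt_id' x).div_const ν).neg.exp

lemma hasDerivAt_ee {ν : ℝ} (hν : 0 < ν) (α β γ : ℝ) (n : ℕ) (x : ℝ) :
    HasDerivAt (ee ν α β γ n) (ee ν α β γ (n + 1) x) x := by
  have hh := hasDerivAt_h ν x
  have ht := (h_pos ν x).ne'
  have h1 := (((hh.inv ht).add ((hh.pow 1).const_mul ((-1) ^ n * β))).add
    ((hh.pow 2).const_mul ((-2) ^ n * γ))).const_mul ((1 / ν) ^ n)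
  have h2 := h1.add_const (if n = 0 then α else 0)
  refine h2.congr_deriv ?_
  unfold ee
  simp only [Nat.add_eq_zero_iff, one_ne_zero, and_false, if_false, pow_succ, pow_zero]
  norm_num
  field_simp

lemma ee_EL {ν : ℝ} (hν : 0 < ν) (α β γ : ℝ) (n : ℕ) : EL ν (ee ν α β γ n) :=
  ((EL.const ν ((1 / ν) ^ n)).mul hν (((EL.hinv ν).add hν
    ((EL.const ν ((-1) ^ n * β)).mul hν (EL.hpow hν 1))).add hν
    ((EL.const ν ((-2) ^ n * γ)).mul hν (EL.hpow hν 2)))).add hν (EL.const ν _)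

lemma main_OO {ν : ℝ} (hν : 0 < ν) (n : ℕ) :
    OO ν 3 (fun x => iteratedDeriv (n + 1) (fun y => Real.log (Z ν y)) x
      - ee ν ((1 - ν) / (2 * ν)) ((1 - ν ^ 2) / (24 * ν ^ 2)) ((1 - ν ^ 2) / (24 * ν ^ 3)) n x) := by
  set α := (1 - ν) / (2 * ν)
  set β := (1 - ν ^ 2) / (24 * ν ^ 2)
  set γ := (1 - ν ^ 2) / (24 * ν ^ 3)
  have key : ∀ n, ∃ G, Alg ν G ∧ iteratedDeriv (n + 1) (fun y => Real.log (Z ν y)) = G ∧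
      OO ν 3 (fun x => G x - ee ν α β γ n x) := by
    intro n
    induction n with
    | zero =>
      refine ⟨mu ν 1, Alg.mu 1, ?_, ?_⟩
      · rw [zero_add, iteratedDeriv_one]
        funext x
        exact (hasDerivAt_logZ hν x).deriv
      · refine OO.div (A := 1) ((V_approx hν 1).congr fun x => ?_)
        have h1 := hpow_mu hν 1 x
        have ht := (h_pos ν x).ne'
        simp only [Finset.sum_range_succ, Finset.sum_range_zero, V_zero hν] at h1
        norm_num at h1
        unfold ee P
        simp only [if_true, pow_zero, pow_one]
        rw [mul_sub, h1, mul_add, mul_add, mul_add, one_mul, mul_add, mul_inv_cancel₀ ht]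
        ring
    | succ n ih =>
      obtain ⟨G, hG, hGe, hO⟩ := ih
      obtain ⟨G', hG', hd⟩ := hG.deriv hν
      refine ⟨G', hG', ?_, ?_⟩
      · rw [iteratedDeriv_succ, hGe]
        funext x
        exact (hd x).deriv
      · refine OO_deriv hν (fun x => (hd x).sub (hasDerivAt_ee hν α β γ n x)) ?_ hO
        refine ((hG'.EL hν).add hν ((EL.const ν (-1)).mul hν (ee_EL hν α β γ (n + 1)))).congr
          fun x => ?_
        ring
  obtain ⟨G, _, hGe, hO⟩ := key n
  rw [hGe]
  exact hO

lemma cumulant_eq (n : ℕ) (ν x : ℝ) :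
    cmpCumulant n (Real.exp x) ν = iteratedDeriv n (fun y => Real.log (Z ν y)) x := by
  unfold cmpCumulant
  have : (fun t : ℝ => Real.log (cmpZ (Real.exp x * Real.exp t) ν))
      = fun t => (fun y => Real.log (Z ν y)) (x + t) := by
    funext t
    rw [← Real.exp_add]
    rfl
  have e := congrFun (iteratedDeriv_comp_const_add n (fun y => Real.log (Z ν y)) x) 0
  rw [this]
  simpa using e

end CMPAux

theorem cmpCumulant_asymptotic (ν : ℝ) (hν : 0 < ν) (n : ℕ) (hn : 2 ≤ n) :
    ∃ C > (0 : ℝ), ∃ Λ > (0 : ℝ), ∀ lam : ℝ, lam ≥ Λ →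
      |ν ^ (n - 1) * lam ^ (-(1 / ν)) * cmpCumulant n lam ν - 1 -
          ((-1 : ℝ) ^ n * (ν ^ 2 - 1) / (24 * ν ^ 2)) * lam ^ (-(2 / ν)) -
          ((-2 : ℝ) ^ n * (ν ^ 2 - 1) / (48 * ν ^ 3)) * lam ^ (-(3 / ν))|
        ≤ C * lam ^ (-(4 / ν)) := by
  obtain ⟨n, rfl⟩ : ∃ k, n = k + 1 := ⟨n - 1, by omega⟩
  have hn0 : n ≠ 0 := by omega
  have h1 := ((CMPAux.OO.hpow ν 1).mul (CMPAux.main_OO hν n)).cmul (ν ^ n)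
  obtain ⟨C, hC, hb⟩ := Asymptotics.IsBigO.exists_pos h1
  obtain ⟨X0, hX0⟩ := Filter.eventually_atTop.mp hb.bound
  refine ⟨C, hC, Real.exp X0, Real.exp_pos _, fun lam hlam => ?_⟩
  have hpos : 0 < lam := (Real.exp_pos X0).trans_le hlam
  obtain ⟨x, rfl⟩ : ∃ x, lam = Real.exp x := ⟨Real.log lam, (Real.exp_log hpos).symm⟩
  have hx : X0 ≤ x := Real.exp_le_exp.mp hlam
  have h2 := hX0 x hx
  have e1 : ∀ k : ℕ, Real.exp x ^ (-((k : ℝ) / ν)) = CMPAux.h ν x ^ k := by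
    intro k
    unfold CMPAux.h
    rw [← Real.exp_mul, ← Real.exp_nat_mul]
    congr 1
    ring
  have q1 := e1 1
  have q2 := e1 2
  have q3 := e1 3
  have q4 := e1 4
  push_cast at q1 q2 q3 q4
  rw [q1, q2, q3, q4, CMPAux.cumulant_eq, Nat.add_sub_cancel]
  have ht := CMPAux.h_pos ν x
  rw [Real.norm_eq_abs, Real.norm_of_nonneg (by positivity)] at h2
  refine le_trans (le_of_eq ?_) h2
  congr 1
  unfold CMPAux.ee
  rw [if_neg hn0]
  generalize iteratedDeriv (n + 1) (fun y => Real.log (CMPAux.Z ν y)) x = I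
  generalize CMPAux.h ν x = t at *
  have e : ν ^ n * (1 / ν) ^ n = 1 := by
    rw [← mul_pow, mul_one_div_cancel hν.ne', one_pow]
  have e' : ν ^ n * (t ^ 1 * (I - ((1 / ν) ^ n * (t⁻¹ + (-1) ^ n * ((1 - ν ^ 2) / (24 * ν ^ 2)) * t ^ 1
      + (-2) ^ n * ((1 - ν ^ 2) / (24 * ν ^ 3)) * t ^ 2) + 0))) =
      ν ^ n * t * I - (ν ^ n * (1 / ν) ^ n) * (t * t⁻¹ + (-1) ^ n * ((1 - ν ^ 2) / (24 * ν ^ 2)) * t ^ 2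
      + (-2) ^ n * ((1 - ν ^ 2) / (24 * ν ^ 3)) * t ^ 3) := by ring
  rw [e', e, mul_inv_cancel₀ ht.ne', pow_succ (-1 : ℝ) n, pow_succ (-2 : ℝ) n]
  ring
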